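/- arXiv:1007.3807 — 4 statements merged into one kernel-verified Lean document; each statement's English description precedes it below -/
import Mathlib

section
/- Let N be a subspace of K^V where K = F², equipped with the bilinear form ⟨f,g⟩ = Σ_{x∈V} ⟨f(x),g(x)⟩_K. For any subset X ⊆ V, (N·X)^⊥ = N^⊥ × X, where N·X = {f restricted to X : f ∈ N} and N × X = {f restricted to X : f ∈ N, f vanishes on V∖X}. -/
variable {F : Type*} [Field F] {V : Type*} [Fintype V] [DecidableEq V]

def bplusL (F : Type*) [Field F] : (F × F) →ₗ[F] (F × F) →ₗ[F] F :=
  LinearMap.mk₂ F (fun x y => x.1 * y.2 + x.2 * y.1)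
    (by intros; simp [Prod.fst_add, Prod.snd_add]; ring)
    (by intros; simp [Prod.smul_fst, Prod.smul_snd, smul_eq_mul]; ring)
    (by intros; simp [Prod.fst_add, Prod.snd_add]; ring)
    (by intros; simp [Prod.smul_fst, Prod.smul_snd, smul_eq_mul]; ring)

def bminusL (F : Type*) [Field F] : (F × F) →ₗ[F] (F × F) →ₗ[F] F :=
  LinearMap.mk₂ F (fun x y => x.1 * y.2 - x.2 * y.1)
    (by intros; simp [Prod.fst_add, Prod.snd_add]; ring)
    (by intros; simp [Prod.smul_fst, Prod.smul_snd, smul_eq_mul]; ring)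
    (by intros; simp [Prod.fst_add, Prod.snd_add]; ring)
    (by intros; simp [Prod.smul_fst, Prod.smul_snd, smul_eq_mul]; ring)

/-- Restriction of chains to a subset `X` of the ground set. -/
def res (F K : Type*) [Semiring F] [AddCommMonoid K] [Module F K]
    {V : Type*} (X : Finset V) : (V → K) →ₗ[F] ({x // x ∈ X} → K) :=
  LinearMap.funLeft F K Subtype.val

/-- `N·X`, the restriction of the chain-group `N` to `X`. -/
def restrictTo {K : Type*} [AddCommGroup K] [Module F K]
    (N : Submodule F (V → K)) (X : Finset V) : Submodule F ({x // x ∈ X} → K) :=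
  N.map (res F K X)

/-- Chains vanishing outside `X`. -/
def vanish (F : Type*) [Semiring F] {K : Type*} [AddCommMonoid K] [Module F K]
    {V : Type*} (X : Finset V) : Submodule F (V → K) where
  carrier := {f | ∀ v ∉ X, f v = 0}
  add_mem' := by
    intro a b ha hb v hv
    simp only [Pi.add_apply, ha v hv, hb v hv, add_zero]
  zero_mem' := by intro v hv; rfl
  smul_mem' := by
    intro c a ha v hv
    simp only [Pi.smul_apply, ha v hv, smul_zero]

/-- `N×X`, the restriction to `X` of the chains in `N` vanishing outside `X`. -/
def timesTo {K : Type*} [AddCommGroup K] [Module F K]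
    (N : Submodule F (V → K)) (X : Finset V) : Submodule F ({x // x ∈ X} → K) :=
  (N ⊓ vanish F X).map (res F K X)

/-- The linear functional `g ↦ ⟨f, g⟩ = ∑ x, ⟨f x, g x⟩_K` on `K^ι`. -/
noncomputable def pairAll (β : (F × F) →ₗ[F] (F × F) →ₗ[F] F) {ι : Type*}
    [Fintype ι] (f : ι → F × F) : (ι → F × F) →ₗ[F] F :=
  ∑ x, (β (f x)).comp (LinearMap.proj x)

/-- The orthogonal complement of a chain-group with respect to the form
`⟨f, g⟩ = ∑ x, ⟨f x, g x⟩_K`. -/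
noncomputable def orthCG (β : (F × F) →ₗ[F] (F × F) →ₗ[F] F) {ι : Type*}
    [Fintype ι] (N : Submodule F (ι → F × F)) : Submodule F (ι → F × F) :=
  ⨅ f ∈ N, LinearMap.ker (pairAll β f)

theorem mem_orthCG (β : (F × F) →ₗ[F] (F × F) →ₗ[F] F) {ι : Type*} [Fintype ι]
    (N : Submodule F (ι → F × F)) (g : ι → F × F) :
    g ∈ orthCG β N ↔ ∀ f ∈ N, ∑ x, β (f x) (g x) = 0 := by
  simp [orthCG, pairAll, Submodule.mem_iInf]

/-- Pairing with a chain vanishing outside `X` only depends on the restrictions to `X`. -/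
theorem sum_pair_res_of_mem_vanish {V : Type*} [Fintype V]
    (β : (F × F) →ₗ[F] (F × F) →ₗ[F] F) {X : Finset V} (f : V → F × F) {g : V → F × F}
    (hg : g ∈ vanish F X) :
    ∑ x, β (res F (F × F) X f x) (res F (F × F) X g x) = ∑ v, β (f v) (g v) := by
  change ∑ x : {x // x ∈ X}, β (f x) (g x) = _
  rw [Finset.sum_coe_sort X fun v => β (f v) (g v)]
  refine Finset.sum_subset (Finset.subset_univ X) fun v _ hv => ?_
  rw [hg v hv, map_zero]

/-- Every chain on `X` is the restriction of a chain vanishing outside `X`. -/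
theorem exists_mem_vanish_res_eq {V : Type*} (X : Finset V) (g : {x // x ∈ X} → F × F) :
    ∃ h ∈ vanish F X, res F (F × F) X h = g := by
  classical
  refine ⟨fun v => if hv : v ∈ X then g ⟨v, hv⟩ else 0, fun v hv => dif_neg hv, ?_⟩
  ext x : 1
  exact dif_pos x.2

/-- `(N·X)^⊥ = N^⊥ × X`. -/
theorem orth_restrict_eq_times_orth (β : (F × F) →ₗ[F] (F × F) →ₗ[F] F)
    (hβ : β = bplusL F ∨ β = bminusL F)
    (N : Submodule F (V → F × F)) (X : Finset V) :
    orthCG β (restrictTo N X) = timesTo (orthCG β N) X := by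
  ext g
  simp only [mem_orthCG, restrictTo, timesTo, Submodule.mem_map, Submodule.mem_inf,
    forall_exists_index, and_imp, forall_apply_eq_imp_iff₂]
  constructor
  · intro hg
    obtain ⟨h, hh, rfl⟩ := exists_mem_vanish_res_eq X g
    exact ⟨h, ⟨fun f hf => (sum_pair_res_of_mem_vanish β f hh).symm.trans (hg f hf), hh⟩, rfl⟩
  · rintro ⟨h, ⟨horth, hh⟩, rfl⟩ f hf
    exact (sum_pair_res_of_mem_vanish β f hh).trans (horth f hf)
end

section
/- Let N be a subspace of K^V. For subsets X, Y ⊆ V, dim(N×(X∪Y)) + dim(N×(X∩Y)) ≥ dim(N×X) + dim(N×Y), where N×T = {f restricted to T : f ∈ N, f vanishes on V∖T}. -/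
variable {F : Type*} [Field F] {V : Type*} [Fintype V] [DecidableEq V]

/-- A chain vanishing outside `X` is determined by its restriction to `X`. -/
theorem injOn_res_vanish {F K V : Type*} [Semiring F] [AddCommMonoid K] [Module F K]
    (X : Finset V) : Set.InjOn (res F K X) (vanish F X : Submodule F (V → K)) := by
  intro f hf g hg hfg
  funext v
  by_cases hv : v ∈ X
  · exact congrFun hfg ⟨v, hv⟩
  · rw [hf v hv, hg v hv]

theorem vanish_mono {F K V : Type*} [Semiring F] [AddCommMonoid K] [Module F K]
    {X Y : Finset V} (h : X ⊆ Y) : (vanish F X : Submodule F (V → K)) ≤ vanish F Y :=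
  fun _ hf v hv => hf v fun hX => hv (h hX)

theorem vanish_inf_vanish_le {F K V : Type*} [Semiring F] [AddCommMonoid K] [Module F K]
    [DecidableEq V] (X Y : Finset V) :
    (vanish F X ⊓ vanish F Y : Submodule F (V → K)) ≤ vanish F (X ∩ Y) := by
  rintro f ⟨hX, hY⟩ v hv
  by_cases h : v ∈ X
  · exact hY v fun h' => hv (Finset.mem_inter.2 ⟨h, h'⟩)
  · exact hX v h

theorem finrank_timesTo {F K V : Type*} [Field F] [AddCommGroup K] [Module F K]
    (N : Submodule F (V → K)) (X : Finset V) :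
    Module.finrank F (timesTo N X) = Module.finrank F ↥(N ⊓ vanish F X) := by
  have hinj : Function.Injective ((res F K X).domRestrict (N ⊓ vanish F X)) :=
    fun f g h => Subtype.ext (injOn_res_vanish X f.2.2 g.2.2 h)
  rw [timesTo, ← LinearMap.range_domRestrict]
  exact LinearMap.finrank_range_of_inj hinj

/-- `dim(N×(X∪Y)) + dim(N×(X∩Y)) ≥ dim(N×X) + dim(N×Y)`. -/
theorem finrank_times_union_add_inter {K : Type*} [AddCommGroup K] [Module F K]
    [FiniteDimensional F K] (N : Submodule F (V → K)) (X Y : Finset V) :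
    Module.finrank F (timesTo N X) + Module.finrank F (timesTo N Y)
      ≤ Module.finrank F (timesTo N (X ∪ Y))
        + Module.finrank F (timesTo N (X ∩ Y)) := by
  simp only [finrank_timesTo]
  rw [← Submodule.finrank_sup_add_finrank_inf_eq]
  refine add_le_add (Submodule.finrank_mono ?_) (Submodule.finrank_mono ?_)
  · exact sup_le (inf_le_inf_left N (vanish_mono Finset.subset_union_left))
      (inf_le_inf_left N (vanish_mono Finset.subset_union_right))
  · rw [← inf_inf_distrib_left]
    exact inf_le_inf_left N (vanish_inf_vanish_le X Y)
end

section
/- Let N be a subspace of K^V with K = F², v ∈ V, and let v↑ ∈ K^V be the chain with v↑(v) = (1,0) and v↑(w) = 0 for w ≠ v. Define N∖v = {f restricted to V∖{v} : f ∈ N, ⟨f(v),(1,0)⟩_K = 0}. Then dim(N∖v) = dim N if v↑ ∉ N and v↑ ∈ N^⊥; dim(N∖v) = dim N − 2 if v↑ ∈ N and v↑ ∉ N^⊥; and dim(N∖v) = dim N − 1 otherwise. -/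
variable {F : Type*} [Field F] {V : Type*} [Fintype V] [DecidableEq V]

/-- The constraint `⟨f(v),(1,0)⟩_K = 0` for all `v ∈ X`, used for deletion. -/
def delC (β : (F × F) →ₗ[F] (F × F) →ₗ[F] F) (X : Finset V) :
    Submodule F (V → F × F) :=
  ⨅ v ∈ X, LinearMap.ker ((β.flip (1, 0)).comp (LinearMap.proj v))

/-- The deletion `N∖X` of a chain-group `N`. -/
def deleteCG (β : (F × F) →ₗ[F] (F × F) →ₗ[F] F) (N : Submodule F (V → F × F))
    (X : Finset V) : Submodule F ({x // x ∈ Xᶜ} → F × F) :=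
  (N ⊓ delC β X).map (res F (F × F) Xᶜ)

/-- The chain `v↑`, taking value `(1,0)` at `v` and `0` elsewhere. -/
def vup (v : V) : V → F × F := fun w => if w = v then (1, 0) else 0

section FinrankMap

variable {F E E' : Type*} [Field F] [AddCommGroup E] [Module F E] [AddCommGroup E'] [Module F E']

theorem Submodule.finrank_map_add_finrank_inf_ker (M : Submodule F E) [FiniteDimensional F M]
    (g : E →ₗ[F] E') :
    Module.finrank F (M.map g) + Module.finrank F (M ⊓ LinearMap.ker g : Submodule F E) =
      Module.finrank F M := by
  have h := (g.domRestrict M).finrank_range_add_finrank_ker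
  rw [LinearMap.range_domRestrict, LinearMap.ker_domRestrict] at h
  rw [← h, ← Submodule.map_comap_subtype, Submodule.finrank_map_subtype_eq]

theorem Submodule.finrank_map_functional_of_forall_eq_zero {M : Submodule F E} {φ : E →ₗ[F] F}
    (h : ∀ x ∈ M, φ x = 0) : Module.finrank F (M.map φ) = 0 := by
  rw [LinearMap.le_ker_iff_map.1 h, finrank_bot]

theorem Submodule.finrank_map_functional_of_not_forall_eq_zero {M : Submodule F E}
    {φ : E →ₗ[F] F} (h : ¬∀ x ∈ M, φ x = 0) : Module.finrank F (M.map φ) = 1 := by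
  have hne : M.map φ ≠ ⊥ := fun hbot => h (LinearMap.le_ker_iff_map.2 hbot)
  rw [(eq_bot_or_eq_top (M.map φ)).resolve_left hne, finrank_top, Module.finrank_self]

end FinrankMap

theorem sum_pairing_vup (β : (F × F) →ₗ[F] (F × F) →ₗ[F] F) (f : V → F × F) (v : V) :
    ∑ x, β (f x) (vup v x) = β (f v) (1, 0) := by
  rw [Finset.sum_eq_single v] <;> simp +contextual [vup]

theorem pairing_one_zero_eq_zero_iff {β : (F × F) →ₗ[F] (F × F) →ₗ[F] F}
    (hβ : β = bplusL F ∨ β = bminusL F) (x : F × F) : β x (1, 0) = 0 ↔ x.2 = 0 := by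
  rcases hβ with rfl | rfl <;> simp [bplusL, bminusL]

theorem mem_delC_singleton {V : Type*} {β : (F × F) →ₗ[F] (F × F) →ₗ[F] F} {v : V}
    {f : V → F × F} :
    f ∈ delC β {v} ↔ β (f v) (1, 0) = 0 := by
  simp [delC]

theorem mem_ker_res_compl_singleton {v : V} {f : V → F × F} :
    f ∈ LinearMap.ker (res F (F × F) ({v} : Finset V)ᶜ) ↔ ∀ w ≠ v, f w = 0 := by
  simp [res, funext_iff, LinearMap.funLeft]

theorem vup_ne_zero {V : Type*} [DecidableEq V] (v : V) :
    (vup v : V → F × F) ≠ 0 := fun h => by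
  simpa [vup] using congrFun h v

theorem delC_inf_ker_res {β : (F × F) →ₗ[F] (F × F) →ₗ[F] F}
    (hβ : β = bplusL F ∨ β = bminusL F) (v : V) :
    delC β {v} ⊓ LinearMap.ker (res F (F × F) ({v} : Finset V)ᶜ) =
      Submodule.span F {vup v} := by
  ext f
  rw [Submodule.mem_inf, mem_delC_singleton, mem_ker_res_compl_singleton,
    pairing_one_zero_eq_zero_iff hβ, Submodule.mem_span_singleton]
  constructor
  · rintro ⟨hv, hf⟩
    refine ⟨(f v).1, funext fun w => ?_⟩
    by_cases hw : w = v
    · subst hw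
      ext <;> simp [vup, hv]
    · simp [vup, hw, hf w hw]
  · rintro ⟨a, rfl⟩
    simp +contextual [vup]

theorem finrank_inf_span_vup_of_mem {V : Type*} [DecidableEq V]
    {N : Submodule F (V → F × F)} {v : V} (h : vup v ∈ N) :
    Module.finrank F (N ⊓ Submodule.span F {vup v} : Submodule F (V → F × F)) = 1 := by
  rw [inf_eq_right.2 ((Submodule.span_singleton_le_iff_mem _ _).2 h),
    finrank_span_singleton (vup_ne_zero v)]

theorem finrank_inf_span_vup_of_notMem {V : Type*} [DecidableEq V]
    {N : Submodule F (V → F × F)} {v : V} (h : vup v ∉ N) :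
    Module.finrank F (N ⊓ Submodule.span F {vup v} : Submodule F (V → F × F)) = 0 := by
  rw [(Submodule.disjoint_span_singleton_of_notMem h).eq_bot, finrank_bot]

/-- The two rank drops in a deletion: imposing the constraint at `v`, then forgetting `v`. -/
theorem finrank_delete_add {β : (F × F) →ₗ[F] (F × F) →ₗ[F] F}
    (hβ : β = bplusL F ∨ β = bminusL F) (N : Submodule F (V → F × F)) (v : V) :
    Module.finrank F (deleteCG β N {v}) +
        Module.finrank F (N ⊓ Submodule.span F {vup v} : Submodule F (V → F × F)) +
        Module.finrank F (N.map ((β.flip (1, 0)).comp (LinearMap.proj v))) =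
      Module.finrank F N := by
  have hker : delC β {v} = LinearMap.ker ((β.flip (1, 0)).comp (LinearMap.proj v)) := by
    simp [delC]
  rw [← N.finrank_map_add_finrank_inf_ker ((β.flip (1, 0)).comp (LinearMap.proj v)), ← hker,
    ← (N ⊓ delC β {v}).finrank_map_add_finrank_inf_ker (res F (F × F) ({v} : Finset V)ᶜ),
    inf_assoc, delC_inf_ker_res hβ, deleteCG, add_comm]

/-- The dimension of the deletion `N∖v`:  it equals `dim N` if `v↑ ∉ N` and
`v↑ ∈ N^⊥`; `dim N − 2` if `v↑ ∈ N` and `v↑ ∉ N^⊥`; and `dim N − 1`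
otherwise. -/
theorem finrank_delete (β : (F × F) →ₗ[F] (F × F) →ₗ[F] F)
    (hβ : β = bplusL F ∨ β = bminusL F)
    (N : Submodule F (V → F × F)) (v : V) :
    (vup v ∉ N ∧ (∀ f ∈ N, ∑ x, β (f x) (vup v x) = 0) →
      Module.finrank F (deleteCG β N {v}) = Module.finrank F N) ∧
    (vup v ∈ N ∧ ¬(∀ f ∈ N, ∑ x, β (f x) (vup v x) = 0) →
      Module.finrank F (deleteCG β N {v}) + 2 = Module.finrank F N) ∧
    (¬(vup v ∉ N ∧ (∀ f ∈ N, ∑ x, β (f x) (vup v x) = 0)) →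
      ¬(vup v ∈ N ∧ ¬(∀ f ∈ N, ∑ x, β (f x) (vup v x) = 0)) →
      Module.finrank F (deleteCG β N {v}) + 1 = Module.finrank F N) := by
  have hdim := finrank_delete_add hβ N v
  simp only [sum_pairing_vup]
  by_cases hN : vup v ∈ N <;> by_cases hP : ∀ f ∈ N, β (f v) (1, 0) = 0
  all_goals
    first
    | rw [finrank_inf_span_vup_of_mem hN] at hdim
    | rw [finrank_inf_span_vup_of_notMem hN] at hdim
    first
    | rw [Submodule.finrank_map_functional_of_forall_eq_zero hP] at hdim
    | rw [Submodule.finrank_map_functional_of_not_forall_eq_zero hP] at hdim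
    refine ⟨fun h => ?_, fun h => ?_, fun h h' => ?_⟩ <;> first | omega | tauto
end

section
/- If N is a totally isotropic subspace of K^V (K = F²) and M is obtained from N by any sequence of deletions and contractions yielding a chain-group on V' ⊆ V, then |V'| − dim M ≤ |V| − dim N. Consequently, every minor of a Lagrangian chain-group is Lagrangian. -/
variable {F : Type*} [Field F] {V : Type*} [Fintype V] [DecidableEq V]

/-- The constraint `⟨f(v),(0,1)⟩_K = 0` for all `v ∈ X`, used for contraction. -/
def conC (β : (F × F) →ₗ[F] (F × F) →ₗ[F] F) (X : Finset V) :
    Submodule F (V → F × F) :=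
  ⨅ v ∈ X, LinearMap.ker ((β.flip (0, 1)).comp (LinearMap.proj v))

/-- The minor `N/X∖Y` of a chain-group `N`, obtained by contracting `X` and
deleting `Y`, on the ground set `V∖(X∪Y)`. -/
def minorCG (β : (F × F) →ₗ[F] (F × F) →ₗ[F] F) (N : Submodule F (V → F × F))
    (X Y : Finset V) : Submodule F ({x // x ∈ (X ∪ Y)ᶜ} → F × F) :=
  (N ⊓ conC β X ⊓ delC β Y).map (res F (F × F) (X ∪ Y)ᶜ)

theorem finrank_map_add_finrank_inf_ker {U W : Type*} [AddCommGroup U] [Module F U]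
    [FiniteDimensional F U] [AddCommGroup W] [Module F W] (f : U →ₗ[F] W) (P : Submodule F U) :
    Module.finrank F (P.map f) + Module.finrank F (P ⊓ LinearMap.ker f : Submodule F U)
      = Module.finrank F P := by
  rw [← LinearMap.finrank_range_add_finrank_ker (f.domRestrict P), LinearMap.range_domRestrict,
    LinearMap.ker_domRestrict, ← Submodule.finrank_map_subtype_eq P, Submodule.map_comap_subtype]

/-- Two subspaces orthogonal under the dot product have total dimension at most that of the
ambient space. -/
theorem finrank_add_finrank_le_of_dotProduct_eq_zero {n : Type*} [Fintype n]
    (A B : Submodule F (n → F)) (h : ∀ a ∈ A, ∀ b ∈ B, a ⬝ᵥ b = 0) :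
    Module.finrank F A + Module.finrank F B ≤ Fintype.card n := by
  classical
  have hle : A.map (dotProductEquiv F n).toLinearMap ≤ B.dualAnnihilator := by
    rintro _ ⟨a, ha, rfl⟩
    rw [Submodule.mem_dualAnnihilator]
    intro b hb
    simpa using h a ha b hb
  have hrank := Submodule.finrank_mono hle
  have hann := Subspace.finrank_add_finrank_dualAnnihilator_eq B
  rw [LinearEquiv.finrank_map_eq] at hrank
  rw [Module.finrank_fintype_fun_eq_card] at hann
  omega

theorem apply_zero_one_eq_zero_iff {β : (F × F) →ₗ[F] (F × F) →ₗ[F] F}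
    (hβ : β = bplusL F ∨ β = bminusL F) (a : F × F) : β a (0, 1) = 0 ↔ a.1 = 0 := by
  rcases hβ with rfl | rfl <;> simp [bplusL, bminusL]

theorem apply_one_zero_eq_zero_iff {β : (F × F) →ₗ[F] (F × F) →ₗ[F] F}
    (hβ : β = bplusL F ∨ β = bminusL F) (a : F × F) : β a (1, 0) = 0 ↔ a.2 = 0 := by
  rcases hβ with rfl | rfl <;> simp [bplusL, bminusL]

theorem apply_eq_zero_of_fst_eq_zero {β : (F × F) →ₗ[F] (F × F) →ₗ[F] F}
    (hβ : β = bplusL F ∨ β = bminusL F) {a b : F × F} (ha : a.1 = 0) (hb : b.1 = 0) :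
    β a b = 0 := by
  rcases hβ with rfl | rfl <;> simp [bplusL, bminusL, ha, hb]

theorem apply_eq_zero_of_snd_eq_zero {β : (F × F) →ₗ[F] (F × F) →ₗ[F] F}
    (hβ : β = bplusL F ∨ β = bminusL F) {a b : F × F} (ha : a.2 = 0) (hb : b.2 = 0) :
    β a b = 0 := by
  rcases hβ with rfl | rfl <;> simp [bplusL, bminusL, ha, hb]

theorem mem_conC_iff {V : Type*} {β : (F × F) →ₗ[F] (F × F) →ₗ[F] F}
    (hβ : β = bplusL F ∨ β = bminusL F) (X : Finset V) (f : V → F × F) :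
    f ∈ conC β X ↔ ∀ v ∈ X, (f v).1 = 0 := by
  simp [conC, apply_zero_one_eq_zero_iff hβ]

theorem mem_delC_iff {V : Type*} {β : (F × F) →ₗ[F] (F × F) →ₗ[F] F}
    (hβ : β = bplusL F ∨ β = bminusL F) (X : Finset V) (f : V → F × F) :
    f ∈ delC β X ↔ ∀ v ∈ X, (f v).2 = 0 := by
  simp [delC, apply_one_zero_eq_zero_iff hβ]

/-- The isotropic vector paired with at `v`: `(0, 1)` on the contracted set `X`, and `(1, 0)`
elsewhere. -/
def minorVec (F : Type*) [Field F] (X : Finset V) (v : V) : F × F :=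
  if v ∈ X then (0, 1) else (1, 0)

/-- Chains on `X ∪ Y` that are pointwise multiples of `minorVec F X`, extended by zero. -/
def minorIncl (F : Type*) [Field F] (X Y : Finset V) :
    ({x // x ∈ X ∪ Y} → F) →ₗ[F] (V → F × F) :=
  LinearMap.pi fun v =>
    if h : v ∈ X ∪ Y then (LinearMap.proj ⟨v, h⟩).smulRight (minorVec F X v) else 0

/-- The pairings of a chain with `minorVec F X` at the points of `X ∪ Y`. -/
def minorPairing (β : (F × F) →ₗ[F] (F × F) →ₗ[F] F) (X Y : Finset V) :
    (V → F × F) →ₗ[F] ({x // x ∈ X ∪ Y} → F) :=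
  LinearMap.pi fun v => (β.flip (minorVec F X v)).comp (LinearMap.proj v.1)

theorem sum_apply_minorIncl (β : (F × F) →ₗ[F] (F × F) →ₗ[F] F) (X Y : Finset V)
    (f : V → F × F) (c : {x // x ∈ X ∪ Y} → F) :
    ∑ v, β (f v) (minorIncl F X Y c v) = minorPairing β X Y f ⬝ᵥ c := by
  rw [dotProduct, ← Finset.sum_subset (Finset.subset_univ (X ∪ Y)), ← Finset.sum_coe_sort]
  · refine Finset.sum_congr rfl fun v _ => ?_
    have hv := v.2
    simp only [minorIncl, minorPairing, LinearMap.pi_apply, dif_pos hv]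
    simp [mul_comm]
  · intro v _ hv
    simp only [minorIncl, LinearMap.pi_apply, dif_neg hv]
    simp

theorem ker_minorPairing {V : Type*} [DecidableEq V] {β : (F × F) →ₗ[F] (F × F) →ₗ[F] F}
    (hβ : β = bplusL F ∨ β = bminusL F) {X Y : Finset V} (hdisj : Disjoint X Y) :
    LinearMap.ker (minorPairing β X Y) = conC β X ⊓ delC β Y := by
  ext f
  rw [LinearMap.mem_ker, Submodule.mem_inf, mem_conC_iff hβ, mem_delC_iff hβ, funext_iff]
  have key (v) : minorPairing β X Y f v = β (f v) (minorVec F X v) := rfl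
  simp only [key, Pi.zero_apply, minorVec]
  constructor
  · intro h
    refine ⟨fun v hv => ?_, fun v hv => ?_⟩
    · have hv' := h ⟨v, Finset.mem_union_left _ hv⟩
      rwa [if_pos hv, apply_zero_one_eq_zero_iff hβ] at hv'
    · have hv' := h ⟨v, Finset.mem_union_right _ hv⟩
      rwa [if_neg (Finset.disjoint_right.mp hdisj hv), apply_one_zero_eq_zero_iff hβ] at hv'
  · rintro ⟨hX, hY⟩ ⟨v, hv⟩
    by_cases hvX : v ∈ X
    · simpa [hvX, apply_zero_one_eq_zero_iff hβ] using hX v hvX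
    · have hvY : v ∈ Y := (Finset.mem_union.mp hv).resolve_left hvX
      simpa [hvX, apply_one_zero_eq_zero_iff hβ] using hY v hvY

theorem inf_ker_res_le_map_minorIncl {β : (F × F) →ₗ[F] (F × F) →ₗ[F] F}
    (hβ : β = bplusL F ∨ β = bminusL F) (N : Submodule F (V → F × F)) (X Y : Finset V) :
    N ⊓ conC β X ⊓ delC β Y ⊓ LinearMap.ker (res F (F × F) (X ∪ Y)ᶜ)
      ≤ (N.comap (minorIncl F X Y)).map (minorIncl F X Y) := by
  rintro f ⟨⟨⟨hN, hX⟩, hY⟩, hker⟩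
  rw [SetLike.mem_coe, mem_conC_iff hβ] at hX
  rw [SetLike.mem_coe, mem_delC_iff hβ] at hY
  have hf : minorIncl F X Y (fun v => if v.1 ∈ X then (f v).2 else (f v).1) = f := by
    funext v
    by_cases hv : v ∈ X ∪ Y
    · simp only [minorIncl, LinearMap.pi_apply, dif_pos hv]
      by_cases hvX : v ∈ X
      · simpa [minorVec, hvX, Prod.ext_iff] using (hX v hvX).symm
      · have hvY : v ∈ Y := (Finset.mem_union.mp hv).resolve_left hvX
        simpa [minorVec, hvX, Prod.ext_iff] using (hY v hvY).symm
    · simp only [minorIncl, LinearMap.pi_apply, dif_neg hv]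
      exact (congrFun (LinearMap.mem_ker.mp hker) ⟨v, Finset.mem_compl.mpr hv⟩).symm
  exact ⟨_, by simpa only [SetLike.mem_coe, Submodule.mem_comap, hf] using hN, hf⟩

theorem card_add_finrank_le_card_add_finrank_minorCG {β : (F × F) →ₗ[F] (F × F) →ₗ[F] F}
    (hβ : β = bplusL F ∨ β = bminusL F) (N : Submodule F (V → F × F))
    (hiso : ∀ u ∈ N, ∀ w ∈ N, ∑ x, β (u x) (w x) = 0)
    {X Y : Finset V} (hdisj : Disjoint X Y) :
    (X ∪ Y)ᶜ.card + Module.finrank F N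
      ≤ Fintype.card V + Module.finrank F (minorCG β N X Y) := by
  have hpair := finrank_map_add_finrank_inf_ker (minorPairing β X Y) N
  have hres := finrank_map_add_finrank_inf_ker (res F (F × F) (X ∪ Y)ᶜ)
    (N ⊓ conC β X ⊓ delC β Y)
  have hker := (Submodule.finrank_mono (inf_ker_res_le_map_minorIncl hβ N X Y)).trans
    (Submodule.finrank_map_le _ _)
  have horth := finrank_add_finrank_le_of_dotProduct_eq_zero (N.map (minorPairing β X Y))
    (N.comap (minorIncl F X Y)) (by
      rintro _ ⟨f, hf, rfl⟩ c hc
      rw [← sum_apply_minorIncl]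
      exact hiso f hf _ hc)
  rw [ker_minorPairing hβ hdisj, ← inf_assoc] at hpair
  rw [Fintype.card_coe] at horth
  have hcard := Finset.card_add_card_compl (X ∪ Y)
  unfold minorCG
  omega

theorem finrank_le_card_of_isotropic {β : (F × F) →ₗ[F] (F × F) →ₗ[F] F}
    (hβ : β = bplusL F ∨ β = bminusL F) (N : Submodule F (V → F × F))
    (hiso : ∀ u ∈ N, ∀ w ∈ N, ∑ x, β (u x) (w x) = 0) :
    Module.finrank F N ≤ Fintype.card V := by
  have h := card_add_finrank_le_card_add_finrank_minorCG hβ N hiso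
    (Finset.disjoint_empty_right Finset.univ)
  have hempty : IsEmpty {x : V // x ∈ (Finset.univ ∪ ∅ : Finset V)ᶜ} :=
    ⟨fun x => by simpa using x.2⟩
  rw [Module.finrank_zero_of_subsingleton (M := minorCG β N Finset.univ ∅)] at h
  omega

theorem isotropic_minorCG {β : (F × F) →ₗ[F] (F × F) →ₗ[F] F}
    (hβ : β = bplusL F ∨ β = bminusL F) (N : Submodule F (V → F × F))
    (hiso : ∀ u ∈ N, ∀ w ∈ N, ∑ x, β (u x) (w x) = 0) (X Y : Finset V) :
    ∀ u ∈ minorCG β N X Y, ∀ w ∈ minorCG β N X Y, ∑ x, β (u x) (w x) = 0 := by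
  rintro _ ⟨f, ⟨⟨hfN, hfX⟩, hfY⟩, rfl⟩ _ ⟨g, ⟨⟨hgN, hgX⟩, hgY⟩, rfl⟩
  rw [SetLike.mem_coe, mem_conC_iff hβ] at hfX hgX
  rw [SetLike.mem_coe, mem_delC_iff hβ] at hfY hgY
  rw [← hiso f hfN g hgN, ← Finset.sum_subset (Finset.subset_univ (X ∪ Y)ᶜ)]
  · exact Finset.sum_coe_sort (X ∪ Y)ᶜ fun v => β (f v) (g v)
  · intro v _ hv
    rw [Finset.mem_compl, not_not, Finset.mem_union] at hv
    rcases hv with hv | hv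
    · exact apply_eq_zero_of_fst_eq_zero hβ (hfX v hv) (hgX v hv)
    · exact apply_eq_zero_of_snd_eq_zero hβ (hfY v hv) (hgY v hv)

/-- For a totally isotropic chain-group `N` on `V` and a minor `M = N/X∖Y` of
`N` on `V' = V∖(X∪Y)`, one has `|V'| − dim M ≤ |V| − dim N`.  Consequently,
every minor of a Lagrangian chain-group is Lagrangian. -/
theorem minor_corank_le (β : (F × F) →ₗ[F] (F × F) →ₗ[F] F)
    (hβ : β = bplusL F ∨ β = bminusL F)
    (N : Submodule F (V → F × F))
    (hiso : ∀ u ∈ N, ∀ w ∈ N, ∑ x, β (u x) (w x) = 0)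
    (X Y : Finset V) (hdisj : Disjoint X Y) :
    ((X ∪ Y)ᶜ.card + Module.finrank F N
        ≤ Fintype.card V + Module.finrank F (minorCG β N X Y)) ∧
    (Module.finrank F N = Fintype.card V →
      (∀ u ∈ minorCG β N X Y, ∀ w ∈ minorCG β N X Y,
          ∑ x, β (u x) (w x) = 0) ∧
        Module.finrank F (minorCG β N X Y) = (X ∪ Y)ᶜ.card) := by
  have hle := card_add_finrank_le_card_add_finrank_minorCG hβ N hiso hdisj
  refine ⟨hle, fun hN => ?_⟩
  have hminor := isotropic_minorCG hβ N hiso X Y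
  have hge := finrank_le_card_of_isotropic hβ _ hminor
  rw [Fintype.card_coe] at hge
  exact ⟨hminor, by omega⟩
end
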